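/- (No-programming, pure programs) Let H_d and H_p be finite-dimensional complex Hilbert spaces, let G be a unitary operator on H_d ⊗ H_p, and let W, W' be unitary operators on H_d that are not phase-equivalent. Let P, Q ∈ H_p be unit vectors, and suppose that for every unit vector ψ ∈ H_d there exist unit vectors P_ψ, Q_ψ ∈ H_p such that G(ψ ⊗ P) = (Wψ) ⊗ P_ψ and G(ψ ⊗ Q) = (W'ψ) ⊗ Q_ψ. Then ⟨P, Q⟩ = 0. -/

import Mathlib

open Matrix
open scoped InnerProductSpace

noncomputable section

/-- The product vector `u ⊗ v` on `H_d ⊗ H_p`. -/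
def tensVec {d p : Type*} (u : d → ℂ) (v : p → ℂ) : (d × p) → ℂ :=
  fun q => u q.1 * v q.2

/-- Two unitaries are phase-equivalent if they differ by a global phase `e^{iθ}`. -/
def PhaseEquiv {n : Type*} (W W' : Matrix n n ℂ) : Prop :=
  ∃ θ : ℝ, W = Complex.exp (θ * Complex.I) • W'

lemma tensVec_dot {d p : Type*} [Fintype d] [Fintype p] (u u' : d → ℂ) (v v' : p → ℂ) :
    star (tensVec u v) ⬝ᵥ tensVec u' v' = (star u ⬝ᵥ u') * (star v ⬝ᵥ v') := by
  simp only [dotProduct, tensVec, Pi.star_apply, star_mul', Fintype.sum_prod_type,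
    Finset.sum_mul_sum]
  refine Finset.sum_congr rfl fun i _ => Finset.sum_congr rfl fun j _ => ?_
  ring

lemma key_const {d p : Type*} [Fintype d] [Fintype p] [DecidableEq d] [DecidableEq p]
    (G : Matrix (d × p) (d × p) ℂ) (W : Matrix d d ℂ)
    (hW : W ∈ Matrix.unitaryGroup d ℂ) (P : p → ℂ)
    (h : ∀ ψ : EuclideanSpace ℂ d, ‖ψ‖ = 1 → ∃ v : p → ℂ,
      G.mulVec (tensVec ψ P) = tensVec (W.mulVec ψ) v) :
    ∃ v : p → ℂ, ∀ i, G.mulVec (tensVec (Pi.single i 1) P)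
      = tensVec (W.mulVec (Pi.single i 1)) v := by
  have h' : ∀ ψ : d → ℂ, ∃ v : p → ℂ,
      G.mulVec (tensVec ψ P) = tensVec (W.mulVec ψ) v := by
    intro ψ
    by_cases h0 : ψ = 0
    · refine ⟨0, ?_⟩
      have e1 : tensVec ψ P = 0 := by ext q; simp [tensVec, h0]
      rw [e1, Matrix.mulVec_zero]
      ext q; simp [tensVec]
    · set x : EuclideanSpace ℂ d := WithLp.toLp 2 ψ with hx
      have hx0 : x ≠ 0 := by
        intro hh
        apply h0
        have := congrArg WithLp.ofLp hh
        simpa [hx] using this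
      have hn : (‖x‖ : ℂ) ≠ 0 := by exact_mod_cast norm_ne_zero_iff.mpr hx0
      obtain ⟨v, hv⟩ := h (((‖x‖ : ℂ)⁻¹) • x) (by
        rw [norm_smul, norm_inv, Complex.norm_real, norm_norm]
        exact inv_mul_cancel₀ (norm_ne_zero_iff.mpr hx0))
      refine ⟨v, ?_⟩
      have e0 : (((‖x‖ : ℂ)⁻¹ • x : EuclideanSpace ℂ d) : d → ℂ) = (‖x‖ : ℂ)⁻¹ • ψ := rfl
      rw [e0] at hv
      have e1 : ∀ (a : ℂ) (u : d → ℂ) (w : p → ℂ), tensVec (a • u) w = a • tensVec u w := by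
        intro a u w; ext q; simp [tensVec, mul_assoc]
      rw [e1, Matrix.mulVec_smul, Matrix.mulVec_smul, e1] at hv
      exact smul_right_injective _ (inv_ne_zero hn) hv
  choose v hv using h'
  refine ⟨v (fun _ => 1), fun i => ?_⟩
  have hsum : tensVec (fun _ : d => (1 : ℂ)) P = ∑ i : d, tensVec (Pi.single i 1) P := by
    ext q
    simp [tensVec, Finset.sum_apply, Pi.single_apply]
  have hk : ∀ (k : p) (i : d), v (Pi.single i 1) k = v (fun _ => 1) k := by
    intro k
    have hz : W.mulVec (fun i => v (Pi.single i 1) k - v (fun _ => 1) k) = 0 := by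
      ext a
      have := hv (fun _ => 1)
      rw [hsum, Matrix.mulVec_sum] at this
      have := congrFun this (a, k)
      simp only [Finset.sum_apply, hv] at this
      simp only [tensVec, Matrix.mulVec_single_one, Matrix.col_apply] at this
      simp only [Matrix.mulVec, dotProduct, mul_one, Finset.sum_mul] at this
      simp only [Matrix.mulVec, dotProduct, mul_sub, Finset.sum_sub_distrib, this, sub_self,
        Pi.zero_apply]
    have hW1 : star W * W = 1 := (Matrix.mem_unitaryGroup_iff').1 hW
    have h2 := congrArg (fun y => (star W).mulVec y) hz
    simp only [Matrix.mulVec_mulVec, hW1, Matrix.one_mulVec, Matrix.mulVec_zero] at h2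
    intro i
    exact sub_eq_zero.1 (congrFun h2 i)
  rw [hv]
  congr 1
  ext k
  exact hk k i

/-- No-programming, pure programs: let `G` be a unitary on `H_d ⊗ H_p` and
`W, W'` unitaries on `H_d` that are not phase-equivalent.  If `P, Q ∈ H_p` are unit vectors
such that for every unit `ψ ∈ H_d` there are unit vectors `P_ψ, Q_ψ ∈ H_p` with
`G(ψ ⊗ P) = (Wψ) ⊗ P_ψ` and `G(ψ ⊗ Q) = (W'ψ) ⊗ Q_ψ`, then `⟨P, Q⟩ = 0`. -/
theorem stmt6 {d p : Type*} [Fintype d] [Fintype p] [DecidableEq d] [DecidableEq p]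
    (G : Matrix (d × p) (d × p) ℂ) (hG : G ∈ Matrix.unitaryGroup (d × p) ℂ)
    (W W' : Matrix d d ℂ)
    (hW : W ∈ Matrix.unitaryGroup d ℂ) (hW' : W' ∈ Matrix.unitaryGroup d ℂ)
    (hne : ¬ PhaseEquiv W W')
    (P Q : EuclideanSpace ℂ p) (hP : ‖P‖ = 1) (hQ : ‖Q‖ = 1)
    (hprog : ∀ ψ : EuclideanSpace ℂ d, ‖ψ‖ = 1 →
      ∃ Pψ Qψ : EuclideanSpace ℂ p, ‖Pψ‖ = 1 ∧ ‖Qψ‖ = 1 ∧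
        G.mulVec (tensVec ψ P) = tensVec (W.mulVec ψ) Pψ ∧
        G.mulVec (tensVec ψ Q) = tensVec (W'.mulVec ψ) Qψ) :
    ⟪P, Q⟫_ℂ = 0 := by
  classical
  by_contra hc
  apply hne
  obtain ⟨v, hv⟩ := key_const G W hW P (fun ψ hψ => by
    obtain ⟨a, b, _, _, h1, _⟩ := hprog ψ hψ
    exact ⟨a, h1⟩)
  obtain ⟨w, hw⟩ := key_const G W' hW' Q (fun ψ hψ => by
    obtain ⟨a, b, _, _, _, h1⟩ := hprog ψ hψ
    exact ⟨b, h1⟩)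
  have hc' : ⟪P, Q⟫_ℂ = star (P : p → ℂ) ⬝ᵥ (Q : p → ℂ) := by
    rw [EuclideanSpace.inner_eq_star_dotProduct, dotProduct_comm]
  set c := ⟪P, Q⟫_ℂ with hcdef
  set t := star v ⬝ᵥ w with ht
  have hG1 : star G * G = 1 := (Matrix.mem_unitaryGroup_iff').1 hG
  have hGd : ∀ x y : d × p → ℂ, star (G.mulVec x) ⬝ᵥ G.mulVec y = star x ⬝ᵥ y := by
    intro x y
    rw [Matrix.star_mulVec, ← Matrix.dotProduct_mulVec, Matrix.mulVec_mulVec,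
      ← Matrix.star_eq_conjTranspose, hG1, Matrix.one_mulVec]
  have hmat : c • (1 : Matrix d d ℂ) = t • (star W * W') := by
    ext i j
    have h1 := hGd (tensVec (Pi.single i 1) P) (tensVec (Pi.single j 1) Q)
    rw [hv, hw, tensVec_dot, tensVec_dot, ← hc', ← ht] at h1
    have e1 : star (W.mulVec (Pi.single i 1)) ⬝ᵥ W'.mulVec (Pi.single j 1)
        = (star W * W') i j := by
      simp [Matrix.mul_apply, dotProduct, Matrix.star_apply]
    have e2 : star (Pi.single i (1 : ℂ) : d → ℂ) ⬝ᵥ (Pi.single j 1 : d → ℂ)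
        = (1 : Matrix d d ℂ) i j := by
      simp [dotProduct, Pi.single_apply, Matrix.one_apply, eq_comm]
    rw [e1, e2] at h1
    simp only [Matrix.smul_apply, smul_eq_mul]
    rw [mul_comm c, mul_comm t, h1]
  have hWW : W * star W = 1 := (Matrix.mem_unitaryGroup_iff).1 hW
  have hWW' : W' * star W' = 1 := (Matrix.mem_unitaryGroup_iff).1 hW'
  have h3 : c • W = t • W' := by
    have := congrArg (fun M => W * M) hmat
    simpa [← mul_assoc, hWW] using this
  have h4 : W = (t / c) • W' := by
    rw [div_eq_inv_mul, mul_smul, ← h3, smul_smul, inv_mul_cancel₀ hc, one_smul]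
  set z := t / c with hz
  rcases isEmpty_or_nonempty d with hd | ⟨⟨i⟩⟩
  · exact ⟨0, Subsingleton.elim _ _⟩
  have h5 : z * star z = 1 := by
    rw [h4, star_smul, smul_mul_smul_comm, hWW'] at hWW
    simpa using congrFun (congrFun hWW i) i
  have h6 : ‖z‖ = 1 := by
    have : z * (starRingEnd ℂ) z = 1 := h5
    rw [Complex.mul_conj'] at this
    have h7 : ‖z‖ ^ 2 = 1 := by exact_mod_cast this
    nlinarith [norm_nonneg z]
  refine ⟨Complex.arg z, ?_⟩
  have h8 := Complex.norm_mul_exp_arg_mul_I z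
  rw [h6] at h8
  rw [show Complex.exp (Complex.arg z * Complex.I) = z by simpa using h8]
  exact h4

end
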